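/- Let M be a 3-connected matroid and let F_1 = (e_1, ..., e_n) be a fan of M with n >= 5. Let e_i be a rim element of F_1 with 1 <= i <= n−1. Then F_2 = (e_1, ..., e_{i−1}, e_{i+2}, ..., e_n) is a fan of M / e_i \ e_{i+1}, and for all j, e_j is a spoke element of F_1 if and only if it is a spoke element of F_2. -/

import Mathlib

/-!
A 3-connected matroid with at least four elements is simple, and so is its dual. Since
`(M / x \ y)✶ = M✶ / y \ x`, and reading the fan of `M✶` backwards exchanges the roles of the
contracted rim element `x` and the deleted spoke `y`, it is enough to find the triangles of the
shortened fan.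

A triangle disjoint from a triad through `x` survives, because by orthogonality `x` is not on its
line. What remains happens inside five consecutive elements `a, b, c, d, e` with triangles
`{a, b, c}`, `{c, d, e}` and triad `{b, c, d}`. As `a` and `e` are not parallel, orthogonality makes
`{d, a, e}` independent, so these elements do not lie on a line. Hence `d` is not on the line of
`{a, b, c}`, which survives in `M / d \ e`, and `{a, b, d, e}` is a circuit, whose contraction by
`b` gives the new triangle `{a, d, e}` of `M / b \ c`.
-/

open Matroid Set

universe u

variable {α : Type u}

namespace PaperDefs

/-- Deletion of a set of elements from a matroid. -/
def mdel (M : Matroid α) (D : Set α) : Matroid α := M ↾ (M.E \ D)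

/-- Contraction of a set of elements in a matroid. -/
def mcon (M : Matroid α) (C : Set α) : Matroid α := (mdel M✶ C)✶

/-- A circuit: a minimal dependent set. -/
def IsCircuit (M : Matroid α) (C : Set α) : Prop :=
  M.Dep C ∧ ∀ X, X ⊂ C → M.Indep X

/-- A triangle: a 3-element circuit. -/
def IsTriangle (M : Matroid α) (T : Set α) : Prop :=
  IsCircuit M T ∧ T.encard = 3

/-- A triad: a 3-element cocircuit. -/
def IsTriad (M : Matroid α) (T : Set α) : Prop := IsTriangle M✶ T

/-- The (extended natural number) rank of a set in a matroid: the supremum of the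
cardinalities of its independent subsets. -/
noncomputable def erk (M : Matroid α) (X : Set α) : ℕ∞ :=
  ⨆ I ∈ {I : Set α | M.Indep I ∧ I ⊆ X}, I.encard

/-- Two elements are connected if they are equal or lie in a common circuit. -/
def ConnTo (M : Matroid α) (e f : α) : Prop :=
  (e = f ∧ e ∈ M.E) ∨ ∃ C, IsCircuit M C ∧ e ∈ C ∧ f ∈ C

/-- A matroid is connected if its ground set is nonempty and every two of its elements
are connected. -/
def Conn (M : Matroid α) : Prop :=
  M.E.Nonempty ∧ ∀ e ∈ M.E, ∀ f ∈ M.E, ConnTo M e f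

/-- A 2-separation of a matroid: a partition `(X, Y)` of the ground set with both sides
of size at least two and `r(X) + r(Y) - r(M) ≤ 1`. -/
def TwoSep (M : Matroid α) (X Y : Set α) : Prop :=
  X ∪ Y = M.E ∧ Disjoint X Y ∧ 2 ≤ X.encard ∧ 2 ≤ Y.encard ∧
    erk M X + erk M Y ≤ erk M M.E + 1

/-- A matroid is 3-connected if it is connected and has no 2-separation. -/
def ThreeConn (M : Matroid α) : Prop :=
  Conn M ∧ ∀ X Y, ¬ TwoSep M X Y

/-- A matroid is 3-connected up to series and parallel sets if it is connected and, for
every 2-separation `(X, Y)`, `min {r X, r Y} = 1` or `min {r✶ X, r✶ Y} = 1`. -/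
def ThreeConnUpToSP (M : Matroid α) : Prop :=
  Conn M ∧ ∀ X Y, TwoSep M X Y →
    min (erk M X) (erk M Y) = 1 ∨ min (erk M✶ X) (erk M✶ Y) = 1

/-- `N` is a minor of `M`: it is obtained from `M` by contracting a set `C` and deleting
a disjoint set `D`. -/
def IsMinor (N M : Matroid α) : Prop :=
  ∃ C D, C ⊆ M.E ∧ D ⊆ M.E ∧ Disjoint C D ∧ N = mdel (mcon M C) D

/-- `M` is isomorphic to `N`: there is a bijection between the ground sets under which
independence corresponds. -/
def IsoTo (M N : Matroid α) : Prop :=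
  ∃ f : α → α, Set.BijOn f M.E N.E ∧ ∀ I, I ⊆ M.E → (M.Indep I ↔ N.Indep (f '' I))

/-- The cyclic interval `{i, i+1, ..., j-1}` in `ZMod r`. -/
def cycArc (r : ℕ) (i j : ZMod r) : Set (ZMod r) :=
  {k | ∃ m : ℕ, m < (j - i).val ∧ k = i + (m : ZMod r)}

/-- `M` is (isomorphic to) a rank-`r` wheel for some `r ≥ 2`, i.e. the cycle matroid of
the wheel graph with `r` spokes: there is a labelling of the ground set by spokes `s i`
and rim elements `w i` so that the circuits of `M` are precisely the rim together with
the sets consisting of two spokes and the rim elements of one of the two arcs joining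
them. -/
def IsWheel (M : Matroid α) : Prop :=
  ∃ r : ℕ, 2 ≤ r ∧ ∃ s w : ZMod r → α,
    Function.Injective (Sum.elim s w) ∧
    M.E = Set.range s ∪ Set.range w ∧
    ∀ C, IsCircuit M C ↔
      (C = Set.range w ∨
        ∃ i j : ZMod r, i ≠ j ∧ C = {s i, s j} ∪ w '' cycArc r i j)

/-- `M` is (isomorphic to) a rank-`r` whirl for some `r ≥ 2`: obtained from the rank-`r`
wheel by relaxing the rim circuit; its circuits are the two-spokes-plus-arc circuits of
the wheel together with the sets consisting of the whole rim and a single spoke. -/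
def IsWhirl (M : Matroid α) : Prop :=
  ∃ r : ℕ, 2 ≤ r ∧ ∃ s w : ZMod r → α,
    Function.Injective (Sum.elim s w) ∧
    M.E = Set.range s ∪ Set.range w ∧
    ∀ C, IsCircuit M C ↔
      ((∃ i : ZMod r, C = insert (s i) (Set.range w)) ∨
        ∃ i j : ZMod r, i ≠ j ∧ C = {s i, s j} ∪ w '' cycArc r i j)

/-- A triangle if `b = true`, a triad if `b = false`. -/
def TriOrTriad (M : Matroid α) (b : Bool) (T : Set α) : Prop :=
  cond b (IsTriangle M T) (IsTriad M T)

/-- The alternation pattern of a fan, recorded as a list: position `i` (zero-based)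
carries a spoke element iff `fanBool b i = true`, where `b` records whether the first
triple of the fan is a triangle. -/
def fanBool (b : Bool) (i : ℕ) : Bool := if i % 2 = 0 then b else !b

/-- `F` is a fan of `M` whose first triple is a triangle if `b = true` (so that the
first element is a spoke element) and a triad if `b = false`: a list of at least three
distinct elements of the ground set in which every three consecutive elements form
alternately triangles and triads. -/
def IsFanWith (M : Matroid α) (b : Bool) (F : List α) : Prop :=
  3 ≤ F.length ∧ F.Nodup ∧ (∀ x ∈ F, x ∈ M.E) ∧
  ∀ (l₁ : List α) (x y z : α) (l₂ : List α), F = l₁ ++ x :: y :: z :: l₂ →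
    TriOrTriad M (fanBool b l₁.length) {x, y, z}

/-- `F` is a fan of `M`. -/
def IsFan (M : Matroid α) (F : List α) : Prop := ∃ b, IsFanWith M b F

/-- `F` is consistent with `F'`: `F` is a (not necessarily contiguous) subsequence of
`F'` or of its reversal. -/
def Consistent (F F' : List α) : Prop := F.Sublist F' ∨ F.Sublist F'.reverse

/-- A finite family of lists is pairwise disjoint. -/
def PairwiseDisjointLists (𝓕 : Finset (List α)) : Prop :=
  ∀ F ∈ 𝓕, ∀ G ∈ 𝓕, F ≠ G → ∀ x ∈ F, x ∉ G

/-- `𝓕` is a covering family of `M'` relative to `N` and `FN`: a family of pairwise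
disjoint fans of `M'`, of the same size as `FN`, such that every fan of `FN` is
consistent with a member of `𝓕` and every element of `E(M') - E(N)` lies in a member
of `𝓕`. -/
def CoveringFamily (N : Matroid α) (FN : Finset (List α)) (M' : Matroid α)
    (𝓕 : Finset (List α)) : Prop :=
  (∀ F ∈ 𝓕, IsFan M' F) ∧ PairwiseDisjointLists 𝓕 ∧ 𝓕.card = FN.card ∧
  (∀ F ∈ FN, ∃ F' ∈ 𝓕, Consistent F F') ∧
  (∀ x ∈ M'.E \ N.E, ∃ F ∈ 𝓕, x ∈ F)

/-- `M` is obtained from `M'` by a fan-lengthening move on the fan `F₀` of `M'`,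
producing the fan `F` of `M`: either `M' = M \ e₁` where `e₁` is a terminal spoke
element of `F`, or `M' = M / e₁` where `e₁` is a terminal rim element of `F`, or
(when `F` has at least five elements) `M' = M / eᵢ \ eᵢ₊₁` for a rim element `eᵢ`
of `F` with `1 ≤ i ≤ n - 1`; in each case `M` and `M'` are 3-connected and `F₀` is
the corresponding shortened fan. -/
def FanLengthen (M' M : Matroid α) (F₀ F : List α) : Prop :=
  ThreeConn M ∧ 4 ≤ F.length ∧ IsFan M' F₀ ∧
  ∃ b, IsFanWith M b F ∧
    ((∃ e F', F = e :: F' ∧ b = true ∧ M' = mdel M {e} ∧ ThreeConn M' ∧ F₀ = F') ∨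
     (∃ e F', F = e :: F' ∧ b = false ∧ M' = mcon M {e} ∧ ThreeConn M' ∧ F₀ = F') ∨
     (5 ≤ F.length ∧ ∃ (l₁ : List α) (x y : α) (l₂ : List α),
        F = l₁ ++ x :: y :: l₂ ∧ fanBool b l₁.length = false ∧
        M' = mdel (mcon M {x}) {y} ∧ ThreeConn M' ∧ F₀ = l₁ ++ l₂))

/-- The fan-extensions of `N` relative to the family `FN` of fans of `N`: the smallest
collection of matroids containing `N` and closed under fan-lengthening moves performed
on fans belonging to covering families. -/
inductive FanExt (N : Matroid α) (FN : Finset (List α)) : Matroid α → Prop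
  | base : FanExt N FN N
  | step (M' M : Matroid α) (𝓕 : Finset (List α)) (F₀ F : List α) :
      FanExt N FN M' → CoveringFamily N FN M' 𝓕 → F₀ ∈ 𝓕 →
      FanLengthen M' M F₀ F → FanExt N FN M

/-- The covering family `𝓕` of `M` admits a fan-shortening move: there are a matroid
`M'` having `N` as a minor and a fan `F₀` of `M'` such that `M` is obtained from `M'`
by a fan-lengthening move on `F₀` producing a fan that belongs to `𝓕`. -/
def AdmitsFanShortening (N M : Matroid α) (𝓕 : Finset (List α)) : Prop :=
  ∃ (M' : Matroid α) (F₀ F : List α), IsMinor N M' ∧ F ∈ 𝓕 ∧ FanLengthen M' M F₀ F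

/-- The alternation pattern of a fan presented as a function with one-based indices:
position `i` carries a spoke element iff `posBool b i = true`, where `b` records
whether the first triple of the fan is a triangle. -/
def posBool (b : Bool) (i : ℕ) : Bool := if i % 2 = 1 then b else !b

/-- `(e 1, ..., e n)` is a fan of `M` whose first triple is a triangle if `b = true`
(so that `e 1` is a spoke element) and a triad if `b = false`: at least three distinct
elements of the ground set in which every three consecutive elements form alternately
triangles and triads. -/
def IsFanFun (M : Matroid α) (b : Bool) (n : ℕ) (e : ℕ → α) : Prop :=
  3 ≤ n ∧ (∀ i j, 1 ≤ i → i ≤ n → 1 ≤ j → j ≤ n → e i = e j → i = j) ∧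
  (∀ i, 1 ≤ i → i ≤ n → e i ∈ M.E) ∧
  ∀ i, 1 ≤ i → i + 2 ≤ n → TriOrTriad M (posBool b i) {e i, e (i+1), e (i+2)}

/-- The set of elements of the fan `(e 1, ..., e n)`. -/
def fanSet (n : ℕ) (e : ℕ → α) : Set α := {a | ∃ i, 1 ≤ i ∧ i ≤ n ∧ a = e i}

/-- The set of rim elements of the fan `(e 1, ..., e n)` with alternation pattern `b`. -/
def rimSet (b : Bool) (n : ℕ) (e : ℕ → α) : Set α :=
  {a | ∃ i, 1 ≤ i ∧ i ≤ n ∧ posBool b i = false ∧ a = e i}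

/-- `M` is representable over the field `𝔽`. -/
def RepOver (M : Matroid α) (𝔽 : Type*) [Field 𝔽] : Prop :=
  ∃ f : α → (α → 𝔽),
    ∀ I : Set α, I ⊆ M.E → (M.Indep I ↔ LinearIndependent 𝔽 (fun x : I => f (x : α)))

/-- `M` has a minor isomorphic to a member of `𝓢`. -/
def HasSMinor (𝓢 : Set (Matroid α)) (M : Matroid α) : Prop :=
  ∃ S ∈ 𝓢, ∃ N, IsMinor N M ∧ IsoTo N S

/-- `M` is `𝓢`-fragile: for every element `e` of `M`, at least one of `M \ e` and
`M / e` has no `𝓢`-minor. -/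
def SFragile (𝓢 : Set (Matroid α)) (M : Matroid α) : Prop :=
  ∀ e ∈ M.E, ¬ HasSMinor 𝓢 (mdel M {e}) ∨ ¬ HasSMinor 𝓢 (mcon M {e})

end PaperDefs

open PaperDefs

namespace PaperDefs

theorem isCircuit_iff {M : Matroid α} {C : Set α} : IsCircuit M C ↔ M.IsCircuit C :=
  isCircuit_iff_forall_ssubset.symm

theorem erk_eq_eRk (M : Matroid α) (X : Set α) : erk M X = M.eRk X := by
  refine le_antisymm (iSup₂_le fun I hI => hI.1.encard_le_eRk_of_subset hI.2) ?_
  obtain ⟨I, hIX, hI, hcard⟩ := le_eRk_iff.1 (le_refl (M.eRk X))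
  rw [← hcard]
  exact le_iSup₂_of_le I ⟨hI, hIX⟩ le_rfl

theorem dual_mdel_mcon (M : Matroid α) {x y : α} (h : x ≠ y) :
    (mdel (mcon M {x}) {y})✶ = mdel (mcon M✶ {y}) {x} := by
  change (M ／ {x} ＼ {y})✶ = M✶ ／ {y} ＼ {x}
  rw [dual_contract_delete, contract_delete_comm _ (by simpa using h.symm)]

section Simple

/-- A simple matroid: no loops and no parallel pairs. Allowing `x = y` is what excludes loops. -/
def IsSimple (M : Matroid α) : Prop := ∀ x ∈ M.E, ∀ y ∈ M.E, M.Indep {x, y}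

variable {M : Matroid α}

theorem isSimple_of_pairwise (hE : M.E.Nontrivial)
    (h : M.E.Pairwise fun x y => M.Indep {x, y}) : IsSimple M := by
  intro x hx y hy
  obtain rfl | hxy := eq_or_ne x y
  · obtain ⟨z, hz, hzx⟩ := hE.exists_ne x
    exact (h hx hz hzx.symm).subset (by simp)
  · exact h hx hy hxy

theorem eRk_add_one_le_eRank {X : Set α} (hX : X ⊆ M.E) (hns : ¬ M.Spanning X) :
    M.eRk X + 1 ≤ M.eRank := by
  rw [spanning_iff_ground_subset_closure hX, not_subset] at hns
  obtain ⟨z, hz⟩ := hns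
  rw [← eRk_insert_eq_add_one hz]
  exact M.eRk_le_eRank _

theorem eRank_add_one_lt_eRk_add (hM : ∀ X Y, ¬ TwoSep M X Y) {X : Set α} (hX : X ⊆ M.E)
    (hX2 : 2 ≤ X.encard) (hXc : 2 ≤ (M.E \ X).encard) :
    M.eRank + 1 < M.eRk X + M.eRk (M.E \ X) := by
  by_contra! hle
  refine hM X (M.E \ X) ⟨union_sdiff_cancel hX, disjoint_sdiff_right, hX2, hXc, ?_⟩
  simpa only [erk_eq_eRk, eRk_ground] using hle

theorem eRank_add_one_lt_eRk_pair_add (hM : ∀ X Y, ¬ TwoSep M X Y) (hE : 4 ≤ M.E.encard) {x y : α}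
    (hx : x ∈ M.E) (hy : y ∈ M.E) (hxy : x ≠ y) :
    M.eRank + 1 < M.eRk {x, y} + M.eRk (M.E \ {x, y}) := by
  have hcard : ({x, y} : Set α).encard = 2 := encard_pair hxy
  have hsub : {x, y} ⊆ M.E := pair_subset hx hy
  refine eRank_add_one_lt_eRk_add hM hsub hcard.ge ?_
  rw [← encard_sdiff_add_encard_of_subset hsub, hcard] at hE
  exact (ENat.add_le_add_iff_right (k := 2) (by decide)).1 hE

theorem isSimple_of_forall_not_twoSep (hM : ∀ X Y, ¬ TwoSep M X Y) (hE : 4 ≤ M.E.encard) :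
    IsSimple M := by
  refine isSimple_of_pairwise (one_lt_encard_iff_nontrivial.1 (hE.trans_lt' (by decide))) ?_
  intro x hx y hy hxy
  by_contra hdep
  rw [not_indep_iff (pair_subset hx hy)] at hdep
  have hlt := eRk_lt_encard_of_dep_of_finite (by simp) hdep
  rw [encard_pair hxy] at hlt
  refine (eRank_add_one_lt_eRk_pair_add hM hE hx hy hxy).not_ge ?_
  rw [add_comm]
  exact add_le_add (M.eRk_le_eRank _) (Order.le_of_lt_add_one hlt)

theorem isSimple_dual_of_forall_not_twoSep (hM : ∀ X Y, ¬ TwoSep M X Y)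
    (hE : 4 ≤ M.E.encard) : IsSimple M✶ := by
  refine isSimple_of_pairwise (one_lt_encard_iff_nontrivial.1 (hE.trans_lt' (by decide))) ?_
  intro x hx y hy hxy
  by_contra hdep
  have hns : ¬ M.Spanning (M.E \ {x, y}) := fun hsp =>
    hdep ((coindep_iff_compl_spanning (M := M) (pair_subset hx hy)).2 hsp)
  refine (eRank_add_one_lt_eRk_pair_add hM hE hx hy hxy).not_ge ?_
  calc M.eRk {x, y} + M.eRk (M.E \ {x, y})
      ≤ 2 + M.eRk (M.E \ {x, y}) := by
        gcongr
        exact (M.eRk_le_encard _).trans_eq (encard_pair hxy)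
    _ = (M.eRk (M.E \ {x, y}) + 1) + 1 := by ring
    _ ≤ M.eRank + 1 := by
        gcongr
        exact eRk_add_one_le_eRank sdiff_subset hns

end Simple

section Triangle

variable {M : Matroid α} {T : Set α} {a b c x y : α}

theorem IsTriangle.isCircuit (hT : IsTriangle M T) : M.IsCircuit T := isCircuit_iff.1 hT.1

theorem IsTriad.isCocircuit (hT : IsTriad M T) : M.IsCocircuit T := isCircuit_iff.1 hT.1

theorem IsTriangle.indep_pair (hT : IsTriangle M T) (hx : x ∈ T) (hy : y ∈ T) :
    M.Indep {x, y} := by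
  refine hT.isCircuit.ssubset_indep ((pair_subset hx hy).ssubset_of_ne fun heq => ?_)
  have hle := encard_insert_le {y} x
  rw [heq, hT.2, encard_singleton] at hle
  exact absurd hle (by decide)

theorem IsTriangle.eRk_eq_two (hT : IsTriangle M T) : M.eRk T = 2 := by
  have h := hT.isCircuit.eRk_add_one_eq
  rw [hT.2, ← two_add_one_eq_three] at h
  exact ENat.add_left_injective_of_ne_top ENat.one_ne_top h

theorem IsTriangle.mem_closure {X : Set α} (hT : IsTriangle M {a, b, c})
    (ha : a ∈ M.closure X) (hb : b ∈ M.closure X) : c ∈ M.closure X := by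
  have hc := hT.isCircuit.mem_closure_sdiff_singleton_of_mem (e := c) (by simp)
  refine M.closure_subset_closure_of_subset_closure ?_ hc
  rintro z ⟨rfl | rfl | rfl, hz⟩
  exacts [ha, hb, absurd rfl hz]

theorem notMem_closure_of_disjoint_isCocircuit {K X : Set α} (hK : M.IsCocircuit K)
    (hx : x ∈ K) (hXK : Disjoint X K) : x ∉ M.closure X := by
  intro hcl
  obtain ⟨C, hCX, hC, hxC⟩ :=
    exists_isCircuit_of_mem_closure hcl fun hxX => hXK.notMem_of_mem_left hxX hx
  refine hC.inter_isCocircuit_ne_singleton hK (e := x) (Subset.antisymm ?_ ?_)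
  · rintro z ⟨hzC, hzK⟩
    exact (hCX hzC).resolve_right fun hzX => hXK.notMem_of_mem_left hzX hzK
  · exact singleton_subset_iff.2 ⟨hxC, hx⟩

theorem isCircuit_contractElem {C : Set α} (hC : M.IsCircuit C)
    (hx : x ∈ M.E \ M.closure C) : (M ／ {x}).IsCircuit C := by
  have hxC : x ∉ C := fun h => hx.2 (M.mem_closure_of_mem h hC.subset_ground)
  have hxl : M.IsNonloop x := by
    rw [← indep_singleton]
    simpa using M.empty_indep.insert_indep_iff.2
      (.inl ⟨hx.1, fun h => hx.2 (M.closure_subset_closure (empty_subset C) h)⟩)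
  refine isCircuit_iff_forall_ssubset.2 ⟨hC.contract_dep (by simpa using hxC), fun I hI => ?_⟩
  rw [hxl.contractElem_indep_iff, (hC.ssubset_indep hI).insert_indep_iff]
  exact ⟨fun h => hxC (hI.subset h),
    .inl ⟨hx.1, fun h => hx.2 (M.closure_subset_closure hI.subset h)⟩⟩

theorem isTriangle_mdel_mcon_iff :
    IsTriangle (mdel (mcon M {x}) {y}) T ↔ (M ／ {x}).IsCircuit T ∧ y ∉ T ∧ T.encard = 3 := by
  change IsCircuit (M ／ {x} ＼ {y}) T ∧ _ ↔ _
  rw [isCircuit_iff, delete_isCircuit_iff, disjoint_singleton_right, and_assoc]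

theorem IsTriangle.mdel_mcon (hT : IsTriangle M T) (hx : x ∈ M.E \ M.closure T) (hy : y ∉ T) :
    IsTriangle (mdel (mcon M {x}) {y}) T :=
  isTriangle_mdel_mcon_iff.2 ⟨isCircuit_contractElem hT.isCircuit hx, hy, hT.2⟩

end Triangle

theorem triple_reverse (x y z : α) : ({x, y, z} : Set α) = {z, y, x} := by
  grind

/-- `(a, b, c, d, e)` is a fan of `M` whose outer triples are triangles, so that its spokes are
`a`, `c` and `e`. These are the fans within which contracting a rim element interacts with a
triangle. -/
structure IsFiveFan (M : Matroid α) (a b c d e : α) : Prop where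
  nodup : [a, b, c, d, e].Nodup
  left : IsTriangle M {a, b, c}
  middle : IsTriad M {b, c, d}
  right : IsTriangle M {c, d, e}

namespace IsFiveFan

variable {M : Matroid α} {a b c d e : α}

theorem symm (h : IsFiveFan M a b c d e) : IsFiveFan M e d c b a where
  nodup := by simpa using List.nodup_reverse.2 h.nodup
  left := triple_reverse c d e ▸ h.right
  middle := triple_reverse b c d ▸ h.middle
  right := triple_reverse a b c ▸ h.left

theorem notMem_closure_ends (h : IsFiveFan M a b c d e) {x : α} (hx : x ∈ ({b, c, d} : Set α)) :
    x ∉ M.closure {a, e} := by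
  have := h.nodup
  refine notMem_closure_of_disjoint_isCocircuit h.middle.isCocircuit hx ?_
  grind

theorem indep_insert_ends (h : IsFiveFan M a b c d e) (hae : M.Indep {a, e}) {x : α}
    (hx : x ∈ ({b, c, d} : Set α)) : M.Indep {x, a, e} :=
  hae.insert_indep_iff.2 (.inl ⟨h.middle.isCocircuit.subset_ground hx, h.notMem_closure_ends hx⟩)

/-- Otherwise the line spanned by `{a, b, c}` would contain the rank-three set `{d, a, e}`. -/
theorem notMem_closure_left (h : IsFiveFan M a b c d e) (hae : M.Indep {a, e}) :
    d ∉ M.closure {a, b, c} := by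
  intro hd
  have hsub : {a, b, c} ⊆ M.closure {a, b, c} := M.subset_closure _ h.left.isCircuit.subset_ground
  have he : e ∈ M.closure {a, b, c} := h.right.mem_closure (hsub (by simp)) hd
  have hle : ({d, a, e} : Set α).encard ≤ M.eRk (M.closure {a, b, c}) :=
    (h.indep_insert_ends hae (by simp)).encard_le_eRk_of_subset
      (insert_subset hd (pair_subset (hsub (by simp)) he))
  have hcard : ({d, a, e} : Set α).encard = 3 :=
    encard_eq_three.2 ⟨d, a, e, by have := h.nodup; grind⟩
  rw [eRk_closure_eq, h.left.eRk_eq_two, hcard] at hle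
  exact absurd hle (by decide)

theorem isTriangle_left (h : IsFiveFan M a b c d e) (hae : M.Indep {a, e}) :
    IsTriangle (mdel (mcon M {d}) {e}) {a, b, c} :=
  h.left.mdel_mcon ⟨h.middle.isCocircuit.subset_ground (by simp), h.notMem_closure_left hae⟩
    (by have := h.nodup; grind)

theorem indep_insert_left (h : IsFiveFan M a b c d e) (hae : M.Indep {a, e}) :
    M.Indep {d, a, b} :=
  (h.left.indep_pair (by simp) (by simp)).insert_indep_iff.2 <| .inl
    ⟨h.middle.isCocircuit.subset_ground (by simp), fun hcl =>
      h.notMem_closure_left hae (M.closure_subset_closure (by grind) hcl)⟩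

theorem mem_closure_outer (h : IsFiveFan M a b c d e) : b ∈ M.closure {a, d, e} := by
  have hleft : IsTriangle M {a, c, b} := pair_comm b c ▸ h.left
  have hright : IsTriangle M {e, d, c} := h.symm.left
  have hspan : {a, d, e} ⊆ M.closure {a, d, e} := M.subset_closure _ <|
    insert_subset (hleft.isCircuit.subset_ground (by simp))
      (pair_subset (hright.isCircuit.subset_ground (by simp))
        (hright.isCircuit.subset_ground (by simp)))
  exact hleft.mem_closure (hspan (by simp)) (hright.mem_closure (hspan (by simp)) (hspan (by simp)))

theorem isCircuit_sdiff_center (h : IsFiveFan M a b c d e) (hae : M.Indep {a, e}) :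
    M.IsCircuit {b, a, d, e} := by
  have hnd := h.nodup
  have hbae : M.Indep {b, a, e} := h.indep_insert_ends hae (by simp)
  have hdae : M.Indep {d, a, e} := h.indep_insert_ends hae (by simp)
  have hdab : M.Indep {d, a, b} := h.indep_insert_left hae
  have hbed : M.Indep {b, e, d} := h.symm.indep_insert_left (pair_comm a e ▸ hae)
  refine isCircuit_iff_dep_forall_sdiff_singleton_indep.2 ⟨?_, ?_⟩
  · have hground : {b, a, d, e} ⊆ M.E :=
      (union_subset hbae.subset_ground hdae.subset_ground).trans' (by grind)
    rw [← not_indep_iff hground]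
    intro hind
    exact hind.notMem_closure_sdiff_of_mem (mem_insert b _)
      (M.closure_subset_closure (by grind) h.mem_closure_outer)
  · rintro x (rfl | rfl | rfl | rfl)
    · exact hdae.subset (by rw [sdiff_singleton_subset_iff]; grind)
    · exact hbed.subset (by rw [sdiff_singleton_subset_iff]; grind)
    · exact hbae.subset (by rw [sdiff_singleton_subset_iff]; grind)
    · exact hdab.subset (by rw [sdiff_singleton_subset_iff]; grind)

theorem isTriangle_outer (h : IsFiveFan M a b c d e) (hae : M.Indep {a, e}) :
    IsTriangle (mdel (mcon M {b}) {c}) {a, d, e} := by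
  have hnd := h.nodup
  have hcirc := (h.isCircuit_sdiff_center hae).contractElem_isCircuit
    ⟨b, by simp, a, by simp, by grind⟩ (mem_insert b _)
  rw [insert_sdiff_self_of_notMem (by grind)] at hcirc
  exact isTriangle_mdel_mcon_iff.2 ⟨hcirc, by grind, encard_eq_three.2 ⟨a, d, e, by grind⟩⟩

end IsFiveFan

theorem posBool_eq_iff (b : Bool) (i j : ℕ) : posBool b i = posBool b j ↔ i % 2 = j % 2 := by
  cases b <;> grind [posBool]

theorem posBool_posBool (b : Bool) (m j : ℕ) :
    posBool (posBool b (m + 1)) j = posBool b (m + j) := by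
  cases b <;> grind [posBool]

theorem posBool_succ (b : Bool) (i : ℕ) : posBool b (i + 1) = !posBool b i := by
  cases b <;> grind [posBool]

/-- The sequence `(e n, ..., e 1)`, again indexed from one. -/
def revSeq (n : ℕ) (e : ℕ → α) (k : ℕ) : α := e (n + 1 - k)

/-- The position in `(e 1, e 2, ...)` of the `k`-th term of
`(e 1, ..., e (i - 1), e (i + 2), ...)`. -/
def skip (i k : ℕ) : ℕ := if k < i then k else k + 2

theorem skip_of_lt {i k : ℕ} (h : k < i) : skip i k = k := if_pos h

theorem skip_of_le {i k : ℕ} (h : i ≤ k) : skip i k = k + 2 := if_neg h.not_gt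

theorem revSeq_skip {n i k : ℕ} (hk : k + 1 ≤ n) (e : ℕ → α) :
    revSeq n e (skip (n - i) k) = e (skip i (n - 1 - k)) := by
  grind [revSeq, skip]

namespace IsFanFun

variable {M : Matroid α} {b : Bool} {n i j k : ℕ} {e : ℕ → α}

theorem mem_ground (h : IsFanFun M b n e) (hj : 1 ≤ j) (hjn : j ≤ n) : e j ∈ M.E :=
  h.2.2.1 j hj hjn

theorem apply_inj (h : IsFanFun M b n e) (hj : 1 ≤ j) (hjn : j ≤ n) (hk : 1 ≤ k) (hkn : k ≤ n) :
    e j = e k ↔ j = k :=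
  ⟨h.2.1 j k hj hjn hk hkn, congrArg e⟩

theorem isTriangle (h : IsFanFun M b n e) (hk : 1 ≤ k) (hkn : k + 2 ≤ n)
    (hkb : posBool b k = true) : IsTriangle M {e k, e (k + 1), e (k + 2)} := by
  simpa only [TriOrTriad, hkb, cond_true] using h.2.2.2 k hk hkn

theorem isTriad (h : IsFanFun M b n e) (hk : 1 ≤ k) (hkn : k + 2 ≤ n)
    (hkb : posBool b k = false) : IsTriad M {e k, e (k + 1), e (k + 2)} := by
  simpa only [TriOrTriad, hkb, cond_false] using h.2.2.2 k hk hkn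

theorem le_encard_ground (h : IsFanFun M b n e) : n ≤ M.E.encard := by
  have hinj : InjOn e (Finset.Icc 1 n) := by
    intro j hj k hk hjk
    rw [Finset.coe_Icc, mem_Icc] at hj hk
    exact (h.apply_inj hj.1 hj.2 hk.1 hk.2).1 hjk
  have hsub : e '' Finset.Icc 1 n ⊆ M.E := by
    rintro _ ⟨k, hk, rfl⟩
    rw [Finset.coe_Icc, mem_Icc] at hk
    exact h.mem_ground hk.1 hk.2
  calc (n : ℕ∞) = (e '' Finset.Icc 1 n).encard := by
        rw [hinj.encard_image, encard_coe_eq_coe_finsetCard, Nat.card_Icc, Nat.add_sub_cancel]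
    _ ≤ M.E.encard := encard_le_encard hsub

theorem isFiveFan (h : IsFanFun M b n e) (hk : 1 ≤ k) (hkn : k + 4 ≤ n)
    (hkb : posBool b k = true) :
    IsFiveFan M (e k) (e (k + 1)) (e (k + 2)) (e (k + 3)) (e (k + 4)) where
  nodup := by
    have hinj := h.2.1
    grind
  left := h.isTriangle hk (by omega) hkb
  middle := h.isTriad (by omega) (by omega) (by rw [posBool_succ, hkb, Bool.not_true])
  right := h.isTriangle (by omega) hkn (by rw [← hkb, posBool_eq_iff]; omega)

theorem dual_revSeq (h : IsFanFun M b n e) : IsFanFun M✶ (posBool b (n + 1)) n (revSeq n e) := by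
  refine ⟨h.1, ?_, fun k hk hkn => h.mem_ground (by omega) (by omega), fun k hk hkn => ?_⟩
  · intro j k hj hjn hk hkn hjk
    have := (h.apply_inj (by omega) (by omega) (by omega) (by omega)).1 hjk
    omega
  · obtain ⟨m, rfl⟩ : ∃ m, n = m + k + 1 := ⟨n - k - 1, by omega⟩
    have htriple : ({revSeq (m + k + 1) e k, revSeq (m + k + 1) e (k + 1),
        revSeq (m + k + 1) e (k + 2)} : Set α) = {e m, e (m + 1), e (m + 2)} := by
      grind [revSeq]
    have hpos : posBool (posBool b (m + k + 1 + 1)) k = !posBool b m := by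
      rw [posBool_posBool, ← posBool_succ, posBool_eq_iff]
      omega
    have hm := h.2.2.2 m (by omega) (by omega)
    rw [htriple, hpos]
    cases hb : posBool b m <;>
      simpa only [TriOrTriad, IsTriad, hb, Bool.not_true, Bool.not_false, cond_true, cond_false,
        dual_dual] using hm

theorem isTriangle_mdel_mcon_of_far (h : IsFanFun M b n e) (hk : 1 ≤ k) (hkn : k + 2 ≤ n)
    (hkb : posBool b k = true) (hj : 1 ≤ j) (hjn : j + 2 ≤ n) (hjb : posBool b j = false)
    (hfar : k + 2 < j ∨ j + 2 < k) {x y : α} (hx : x ∈ ({e j, e (j + 1), e (j + 2)} : Set α))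
    (hy : y ∉ ({e k, e (k + 1), e (k + 2)} : Set α)) :
    IsTriangle (mdel (mcon M {x}) {y}) {e k, e (k + 1), e (k + 2)} := by
  have hK := (h.isTriad hj hjn hjb).isCocircuit
  refine (h.isTriangle hk hkn hkb).mdel_mcon
    ⟨hK.subset_ground hx, notMem_closure_of_disjoint_isCocircuit hK hx ?_⟩ hy
  have hinj := h.2.1
  grind

theorem isTriangle_skip (hM : IsSimple M) (h : IsFanFun M b n e) (hi : 1 ≤ i) (hin : i + 1 ≤ n)
    (hib : posBool b i = false) (hk : 1 ≤ k) (hkn : k + 4 ≤ n) (hkb : posBool b k = true) :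
    IsTriangle (mdel (mcon M {e i}) {e (i + 1)})
      {e (skip i k), e (skip i (k + 1)), e (skip i (k + 2))} := by
  have hinj := h.2.1
  have hfive := h.isFiveFan hk hkn hkb
  have hends : M.Indep {e k, e (k + 4)} :=
    hM _ (h.mem_ground hk (by omega)) _ (h.mem_ground (by omega) hkn)
  have hpar : i % 2 ≠ k % 2 := by rw [ne_eq, ← posBool_eq_iff b, hib, hkb]; decide
  obtain hik | hik | hik | hik : k + 5 ≤ i ∨ i = k + 3 ∨ i = k + 1 ∨ i + 1 ≤ k := by omega
  · obtain ⟨j, rfl⟩ : ∃ j, i = j + 2 := ⟨i - 2, by omega⟩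
    rw [skip_of_lt (by omega), skip_of_lt (by omega), skip_of_lt (by omega)]
    refine h.isTriangle_mdel_mcon_of_far hk (by omega) hkb (j := j) (by omega) (by omega) ?_
      (by omega) (by simp) (by grind)
    rw [← hib, posBool_eq_iff]
    omega
  · subst hik
    rw [skip_of_lt (by omega), skip_of_lt (by omega), skip_of_lt (by omega)]
    exact hfive.isTriangle_left hends
  · subst hik
    rw [skip_of_lt (by omega), skip_of_le (by omega), skip_of_le (by omega)]
    exact hfive.isTriangle_outer hends
  · rw [skip_of_le (by omega), skip_of_le (by omega), skip_of_le (by omega)]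
    refine h.isTriangle_mdel_mcon_of_far (k := k + 2) (by omega) hkn ?_ hi (by omega) hib
      (by omega) (by simp) (by grind)
    rw [← hkb, posBool_eq_iff]
    omega

theorem isTriad_skip (hM : IsSimple M✶) (h : IsFanFun M b n e) (hi : 1 ≤ i) (hin : i + 1 ≤ n)
    (hib : posBool b i = false) (hk : 1 ≤ k) (hkn : k + 4 ≤ n) (hkb : posBool b k = false) :
    IsTriad (mdel (mcon M {e i}) {e (i + 1)})
      {e (skip i k), e (skip i (k + 1)), e (skip i (k + 2))} := by
  have hne : e i ≠ e (i + 1) := by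
    rw [ne_eq, h.apply_inj hi (by omega) (by omega) hin]
    omega
  have hib' : posBool (posBool b (n + 1)) (n - i) = false := by
    rw [posBool_posBool, ← hib, posBool_eq_iff]
    omega
  have hkb' : posBool (posBool b (n + 1)) (n - 3 - k) = true := by
    rw [posBool_posBool, ← Bool.not_false, ← hkb, ← posBool_succ, posBool_eq_iff]
    omega
  have htri := h.dual_revSeq.isTriangle_skip hM (i := n - i) (k := n - 3 - k) (by omega) (by omega)
    hib' (by omega) (by omega) hkb'
  rw [revSeq_skip (by omega), revSeq_skip (by omega), revSeq_skip (by omega),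
    triple_reverse] at htri
  rw [IsTriad, dual_mdel_mcon M hne]
  convert htri using 4 <;> grind [revSeq]

end IsFanFun

end PaperDefs

theorem statement9_general (M : Matroid α) (hM : IsSimple M) (hM' : IsSimple M✶) (b : Bool)
    (n : ℕ) (e : ℕ → α) (hfan : IsFanFun M b n e) (hn : 5 ≤ n) (i : ℕ) (hi1 : 1 ≤ i)
    (hin : i ≤ n - 1) (hrim : posBool b i = false) :
    IsFanFun (mdel (mcon M {e i}) {e (i+1)}) b (n - 2)
      (fun k => if k < i then e k else e (k + 2)) := by
  have hskip : (fun k => if k < i then e k else e (k + 2)) = fun k => e (skip i k) := by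
    funext k
    exact (apply_ite e _ _ _).symm
  have hinj := hfan.2.1
  rw [hskip]
  refine ⟨by omega, fun j k hj hjn hk hkn hjk => ?_, fun k hk hkn => ?_, fun k hk hkn => ?_⟩
  · grind [skip]
  · have hmem : e (skip i k) ∈ M.E := hfan.mem_ground (by grind [skip]) (by grind [skip])
    exact ⟨⟨hmem, by grind [skip]⟩, by grind [skip]⟩
  · cases hkb : posBool b k
    · exact hfan.isTriad_skip hM' hi1 (by omega) hrim hk (by omega) hkb
    · exact hfan.isTriangle_skip hM hi1 (by omega) hrim hk (by omega) hkb

/-- If `(e 1, ..., e n)` is a fan of the 3-connected matroid `M` with `n ≥ 5` and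
`e i` is a rim element with `1 ≤ i ≤ n - 1`, then
`(e 1, ..., e (i-1), e (i+2), ..., e n)` is a fan of `M / e i \ e (i+1)` with the same
partition into spoke and rim elements. -/
theorem statement9 (M : Matroid α) (hM3 : ThreeConn M) (b : Bool) (n : ℕ) (e : ℕ → α)
    (hfan : IsFanFun M b n e) (hn : 5 ≤ n)
    (i : ℕ) (hi1 : 1 ≤ i) (hin : i ≤ n - 1) (hrim : posBool b i = false) :
    IsFanFun (mdel (mcon M {e i}) {e (i+1)}) b (n - 2)
      (fun k => if k < i then e k else e (k + 2)) := by
  have hE : 4 ≤ M.E.encard :=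
    le_trans (by exact_mod_cast (by omega : 4 ≤ n)) hfan.le_encard_ground
  exact statement9_general M (isSimple_of_forall_not_twoSep hM3.2 hE)
    (isSimple_dual_of_forall_not_twoSep hM3.2 hE) b n e hfan hn i hi1 hin hrim
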